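/- arXiv:2307.09606 — 6 statements merged into one kernel-verified Lean document; each statement's English description precedes it below -/
import Mathlib

section
/- Let E be a finite set and let f : E → {a,b,c,d} be a uniformly random coloring. For any two distinct pairs of colors {s,t} and {s,u} sharing exactly one common color, and any two families 𝒜, ℬ of subsets of E, the events {E_{st}(f) ∈ 𝒜} and {E_{su}(f) ∈ ℬ} are independent: P(E_{st}(f) ∈ 𝒜 and E_{su}(f) ∈ ℬ) = P(E_{st}(f) ∈ 𝒜) · P(E_{su}(f) ∈ ℬ). Equivalently, counting colorings, 4^{|E|} · #{f : E_{st}(f) ∈ 𝒜, E_{su}(f) ∈ ℬ} = #{f : E_{st}(f) ∈ 𝒜} · #{f : E_{su}(f) ∈ ℬ}. -/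
open Finset

/-- `Est f s t` is the set of elements colored `s` or `t` by the coloring `f`. -/
def Est {E : Type*} [Fintype E] [DecidableEq E] (f : E → Fin 4) (s t : Fin 4) : Finset E :=
  Finset.univ.filter (fun e => f e = s ∨ f e = t)

/-- A color is determined by its membership in `{s, t}` and in `{s, u}`. -/
lemma color_eq_of_mem_pair_iff {s t u : Fin 4} (hst : s ≠ t) (hsu : s ≠ u) (htu : t ≠ u)
    {x y : Fin 4} (h₁ : x = s ∨ x = t ↔ y = s ∨ y = t) (h₂ : x = s ∨ x = u ↔ y = s ∨ y = u) :
    x = y := by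
  omega

lemma Est_pair_bijective (E : Type*) [Fintype E] [DecidableEq E]
    {s t u : Fin 4} (hst : s ≠ t) (hsu : s ≠ u) (htu : t ≠ u) :
    Function.Bijective (fun f : E → Fin 4 => (Est f s t, Est f s u)) := by
  refine (Fintype.bijective_iff_injective_and_card _).2 ⟨fun f g h => funext fun e => ?_, ?_⟩
  · obtain ⟨h₁, h₂⟩ := Prod.mk.inj h
    exact color_eq_of_mem_pair_iff hst hsu htu
      (by simpa [Est] using Finset.ext_iff.1 h₁ e) (by simpa [Est] using Finset.ext_iff.1 h₂ e)
  · simp [← mul_pow]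

lemma card_filter_Est_mem_and_Est_mem {E : Type*} [Fintype E] [DecidableEq E]
    {s t u : Fin 4} (hst : s ≠ t) (hsu : s ≠ u) (htu : t ≠ u) (𝒜 ℬ : Finset (Finset E)) :
    (Finset.univ.filter (fun f : E → Fin 4 => Est f s t ∈ 𝒜 ∧ Est f s u ∈ ℬ)).card
      = 𝒜.card * ℬ.card := by
  rw [← Finset.card_product]
  refine Finset.card_bijective _ (Est_pair_bijective E hst hsu htu) fun f => ?_
  simp

/-- For a uniformly random 4-coloring `f` of a finite set `E`, and two pairs of colors
`{s,t}` and `{s,u}` sharing exactly one common color, the events `E_{st}(f) ∈ 𝒜` and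
`E_{su}(f) ∈ ℬ` are independent. -/
theorem pairwise_independence (E : Type*) [Fintype E] [DecidableEq E]
    (s t u : Fin 4) (hst : s ≠ t) (hsu : s ≠ u) (htu : t ≠ u)
    (𝒜 ℬ : Finset (Finset E)) :
    ((Finset.univ.filter
        (fun f : E → Fin 4 => Est f s t ∈ 𝒜 ∧ Est f s u ∈ ℬ)).card : ℚ)
        / 4 ^ Fintype.card E
      = (((Finset.univ.filter (fun f : E → Fin 4 => Est f s t ∈ 𝒜)).card : ℚ)
            / 4 ^ Fintype.card E)
        * (((Finset.univ.filter (fun f : E → Fin 4 => Est f s u ∈ ℬ)).card : ℚ)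
            / 4 ^ Fintype.card E) ∧
    (4 : ℕ) ^ Fintype.card E *
        (Finset.univ.filter
          (fun f : E → Fin 4 => Est f s t ∈ 𝒜 ∧ Est f s u ∈ ℬ)).card
      = (Finset.univ.filter (fun f : E → Fin 4 => Est f s t ∈ 𝒜)).card *
        (Finset.univ.filter (fun f : E → Fin 4 => Est f s u ∈ ℬ)).card := by
  have hA := card_filter_Est_mem_and_Est_mem hst hsu htu 𝒜 Finset.univ
  have hB := card_filter_Est_mem_and_Est_mem hst hsu htu Finset.univ ℬ
  simp only [Finset.mem_univ, and_true, true_and, Finset.card_univ, Fintype.card_finset] at hA hB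
  have hcount : (4 : ℕ) ^ Fintype.card E *
        (Finset.univ.filter
          (fun f : E → Fin 4 => Est f s t ∈ 𝒜 ∧ Est f s u ∈ ℬ)).card
      = (Finset.univ.filter (fun f : E → Fin 4 => Est f s t ∈ 𝒜)).card *
        (Finset.univ.filter (fun f : E → Fin 4 => Est f s u ∈ ℬ)).card := by
    rw [card_filter_Est_mem_and_Est_mem hst hsu htu, hA, hB, show (4 : ℕ) = 2 * 2 from rfl, mul_pow]
    ring
  refine ⟨?_, hcount⟩
  rw [div_mul_div_comm, div_eq_div_iff (by positivity) (by positivity)]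
  have hcount' := congrArg (Nat.cast : ℕ → ℚ) hcount
  push_cast at hcount'
  rw [← hcount']
  ring
end

section
/- Let E be a finite set and let f : E → {a,b,c,d} be a uniformly random coloring. For any closed upward families 𝒰, 𝒱, 𝒲 of subsets of E, writing 𝒰_{ab} for the event {E_{ab}(f) ∈ 𝒰}, 𝒱_{ac} for {E_{ac}(f) ∈ 𝒱}, and 𝒲_{bc} for {E_{bc}(f) ∈ 𝒲}, one has P(𝒰_{ab} ∩ 𝒱_{ac} ∩ 𝒲_{bc}) ≤ P(𝒰_{ab}) · P(𝒱_{ac}) · P(𝒲_{bc}). -/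
open Finset

/-- Membership of a color in the pair `{s, t}`. -/
def pairIndicator (s t c : Fin 4) : Bool := decide (c = s ∨ c = t)

theorem sum_fin_succ_arrow {κ M : Type*} [Fintype κ] [AddCommMonoid M] {n : ℕ}
    (F : (Fin (n + 1) → κ) → M) :
    ∑ f, F f = ∑ c : κ, ∑ f : Fin n → κ, F (Fin.cons c f) := by
  rw [← Fintype.sum_prod_type']
  exact (Fintype.sum_equiv (Fin.consEquiv fun _ => κ) _ _ fun _ => rfl).symm

/-- Negative dependence for monotone functions of the three indicator vectors. -/
theorem sum_mul_mul_le_of_monotone (n : ℕ) (u v w : (Fin n → Bool) → ℚ)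
    (hu : Monotone u) (hv : Monotone v) (hw : Monotone w) :
    (4 ^ n) ^ 2 * ∑ f : Fin n → Fin 4, u (pairIndicator 0 1 ∘ f) *
        v (pairIndicator 0 2 ∘ f) * w (pairIndicator 1 2 ∘ f)
      ≤ (∑ f : Fin n → Fin 4, u (pairIndicator 0 1 ∘ f)) *
        (∑ f : Fin n → Fin 4, v (pairIndicator 0 2 ∘ f)) *
        ∑ f : Fin n → Fin 4, w (pairIndicator 1 2 ∘ f) := by
  induction n with
  | zero => simp
  | succ n ih =>
    have cons_mono (g : (Fin (n + 1) → Bool) → ℚ) (hg : Monotone g) (i : Bool) :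
        Monotone fun A : Fin n → Bool => g (Fin.cons i A) :=
      fun A B hAB => hg (Fin.cons_le_cons.2 ⟨le_rfl, hAB⟩)
    have sum_mono (g : (Fin (n + 1) → Bool) → ℚ) (hg : Monotone g) (s t : Fin 4) :
        ∑ f : Fin n → Fin 4, g (Fin.cons false (pairIndicator s t ∘ f)) ≤
          ∑ f : Fin n → Fin 4, g (Fin.cons true (pairIndicator s t ∘ f)) :=
      Finset.sum_le_sum fun f _ => hg (Fin.cons_le_cons.2 ⟨Bool.false_le _, le_rfl⟩)
    have step (i j k : Bool) := ih _ _ _ (cons_mono u hu i) (cons_mono v hv j) (cons_mono w hw k)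
    have h₀ := step true true false
    have h₁ := step true false true
    have h₂ := step false true true
    have h₃ := step false false false
    have hgap := mul_nonneg (mul_nonneg (sub_nonneg.2 (sum_mono u hu 0 1))
      (sub_nonneg.2 (sum_mono v hv 0 2))) (sub_nonneg.2 (sum_mono w hw 1 2))
    simp only [sum_fin_succ_arrow, Fin.comp_cons, Fin.sum_univ_four,
      show pairIndicator 0 1 0 = true from rfl, show pairIndicator 0 1 1 = true from rfl,
      show pairIndicator 0 1 2 = false from rfl, show pairIndicator 0 1 3 = false from rfl,
      show pairIndicator 0 2 0 = true from rfl, show pairIndicator 0 2 1 = false from rfl,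
      show pairIndicator 0 2 2 = true from rfl, show pairIndicator 0 2 3 = false from rfl,
      show pairIndicator 1 2 0 = false from rfl, show pairIndicator 1 2 1 = true from rfl,
      show pairIndicator 1 2 2 = true from rfl, show pairIndicator 1 2 3 = false from rfl]
    rw [pow_succ]
    linear_combination 16 * h₀ + 16 * h₁ + 16 * h₂ + 16 * h₃ + 8 * hgap

/-- The indicator of a family of subsets of `E`, as a function of Boolean vectors
indexed through an enumeration of `E`. -/
def familyIndicator {E : Type*} [Fintype E] [DecidableEq E] {n : ℕ} (e : E ≃ Fin n)
    (𝒜 : Finset (Finset E)) (x : Fin n → Bool) : ℚ :=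
  if Finset.univ.filter (fun i => x (e i) = true) ∈ 𝒜 then 1 else 0

theorem familyIndicator_monotone {E : Type*} [Fintype E] [DecidableEq E] {n : ℕ} (e : E ≃ Fin n)
    (𝒜 : Finset (Finset E)) (h𝒜 : ∀ A ∈ 𝒜, ∀ B : Finset E, A ⊆ B → B ∈ 𝒜) :
    Monotone (familyIndicator e 𝒜) := by
  intro x y hxy
  have hsub : Finset.univ.filter (fun i => x (e i) = true) ⊆
      Finset.univ.filter (fun i => y (e i) = true) :=
    Finset.monotone_filter_right _ fun i _ => hxy (e i)
  unfold familyIndicator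
  split_ifs with hx hy
  · exact le_rfl
  · exact absurd (h𝒜 _ hx _ hsub) hy
  · exact zero_le_one
  · exact le_rfl

theorem familyIndicator_pairIndicator {E : Type*} [Fintype E] [DecidableEq E] {n : ℕ}
    (e : E ≃ Fin n) (𝒜 : Finset (Finset E)) (s t : Fin 4) (f : E → Fin 4) :
    familyIndicator e 𝒜 (pairIndicator s t ∘ f ∘ e.symm) = if Est f s t ∈ 𝒜 then 1 else 0 := by
  have hset : Finset.univ.filter
      (fun i => (pairIndicator s t ∘ f ∘ e.symm) (e i) = true) = Est f s t := by
    ext i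
    simp [pairIndicator, Est]
  rw [familyIndicator, hset]

/-- For a uniformly random 4-coloring of a finite set `E` and closed upward families
`𝒰, 𝒱, 𝒲`, the events `E_{ab}(f) ∈ 𝒰`, `E_{ac}(f) ∈ 𝒱`, `E_{bc}(f) ∈ 𝒲` are
negatively dependent:
`P(𝒰_{ab} ∩ 𝒱_{ac} ∩ 𝒲_{bc}) ≤ P(𝒰_{ab}) · P(𝒱_{ac}) · P(𝒲_{bc})`. -/
theorem colored_percolation_upward_neg_dep (E : Type*) [Fintype E] [DecidableEq E]
    (𝒰 𝒱 𝒲 : Finset (Finset E))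
    (hU : ∀ A ∈ 𝒰, ∀ B : Finset E, A ⊆ B → B ∈ 𝒰)
    (hV : ∀ A ∈ 𝒱, ∀ B : Finset E, A ⊆ B → B ∈ 𝒱)
    (hW : ∀ A ∈ 𝒲, ∀ B : Finset E, A ⊆ B → B ∈ 𝒲) :
    ((Finset.univ.filter (fun f : E → Fin 4 =>
        Est f 0 1 ∈ 𝒰 ∧ Est f 0 2 ∈ 𝒱 ∧ Est f 1 2 ∈ 𝒲)).card : ℚ)
        / 4 ^ Fintype.card E
      ≤ (((Finset.univ.filter (fun f : E → Fin 4 => Est f 0 1 ∈ 𝒰)).card : ℚ)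
            / 4 ^ Fintype.card E)
        * (((Finset.univ.filter (fun f : E → Fin 4 => Est f 0 2 ∈ 𝒱)).card : ℚ)
            / 4 ^ Fintype.card E)
        * (((Finset.univ.filter (fun f : E → Fin 4 => Est f 1 2 ∈ 𝒲)).card : ℚ)
            / 4 ^ Fintype.card E) := by
  set e := Fintype.equivFin E
  have key := sum_mul_mul_le_of_monotone _ _ _ _ (familyIndicator_monotone e 𝒰 hU)
    (familyIndicator_monotone e 𝒱 hV) (familyIndicator_monotone e 𝒲 hW)
  have reindex (F : (Fin (Fintype.card E) → Fin 4) → ℚ) :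
      ∑ f, F f = ∑ f : E → Fin 4, F (f ∘ e.symm) :=
    (Fintype.sum_equiv (e.arrowCongr (Equiv.refl (Fin 4))) _ _ fun _ => rfl).symm
  simp only [reindex, familyIndicator_pairIndicator, ite_zero_mul_ite_zero, mul_one,
    Finset.sum_boole, and_assoc] at key
  rw [div_mul_div_comm, div_mul_div_comm, div_le_div_iff₀ (by positivity) (by positivity)]
  linear_combination (4 : ℚ) ^ Fintype.card E * key
end

section
/- Let E be a finite set and let f : E → {a,b,c,d} be a uniformly random coloring. For any closed upward families 𝒰, 𝒱, 𝒲 of subsets of E, writing 𝒰_{ab} for the event {E_{ab}(f) ∈ 𝒰}, 𝒱_{ac} for {E_{ac}(f) ∈ 𝒱}, and 𝒲_{ad} for {E_{ad}(f) ∈ 𝒲}, one has P(𝒰_{ab} ∩ 𝒱_{ac} ∩ 𝒲_{ad}) ≥ P(𝒰_{ab}) · P(𝒱_{ac}) · P(𝒲_{ad}). -/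
open Finset

section ColoredPercolation

variable {E : Type*} [DecidableEq E]

/-- Functional form of the inequality, over pairs `(A, B)` of subsets of `S`; the third set is the
set of elements of `S` on which `A` and `B` agree. -/
theorem sum_powerset_mul_sum_mul_sum_le (S : Finset E) :
    ∀ u v w : Finset E → ℚ, Monotone u → Monotone v → Monotone w →
      (∑ A ∈ S.powerset, u A) * (∑ A ∈ S.powerset, v A) * (∑ A ∈ S.powerset, w A) ≤
        2 ^ S.card * ∑ A ∈ S.powerset, ∑ B ∈ S.powerset, u A * v B * w (S \ symmDiff A B) := by
  induction S using Finset.induction_on with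
  | empty => intro u v w _ _ _; simp
  | insert a S ha ih =>
    intro u v w hu hv hw
    have monotone_add_insert : ∀ g : Finset E → ℚ, Monotone g →
        Monotone fun A => g A + g (insert a A) := fun g hg A B h =>
      add_le_add (hg h) (hg (insert_subset_insert a h))
    have key := ih _ _ _ (monotone_add_insert u hu) (monotone_add_insert v hv)
      (monotone_add_insert w hw)
    simp only [sum_powerset_insert ha, ← sum_add_distrib]
    refine key.trans ?_
    rw [card_insert_of_notMem ha, pow_succ, mul_assoc]
    refine mul_le_mul_of_nonneg_left ?_ (by positivity)
    rw [mul_sum]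
    refine sum_le_sum fun A hA => ?_
    rw [mul_sum]
    refine sum_le_sum fun B hB => ?_
    have haA : a ∉ A := fun h => ha (mem_powerset.1 hA h)
    have haB : a ∉ B := fun h => ha (mem_powerset.1 hB h)
    have h₀₀ : insert a S \ symmDiff A B = insert a (S \ symmDiff A B) := by
      ext x; by_cases hx : x = a <;> simp [mem_symmDiff, hx, ha, haA, haB]
    have h₀₁ : insert a S \ symmDiff A (insert a B) = S \ symmDiff A B := by
      ext x; by_cases hx : x = a <;> simp [mem_symmDiff, hx, ha, haA, haB]
    have h₁₀ : insert a S \ symmDiff (insert a A) B = S \ symmDiff A B := by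
      ext x; by_cases hx : x = a <;> simp [mem_symmDiff, hx, ha, haA, haB]
    have h₁₁ : insert a S \ symmDiff (insert a A) (insert a B) =
        insert a (S \ symmDiff A B) := by
      ext x; by_cases hx : x = a <;> simp [mem_symmDiff, hx, ha, haA, haB]
    rw [h₀₀, h₀₁, h₁₀, h₁₁]
    have increments_nonneg := mul_nonneg (mul_nonneg
      (sub_nonneg.2 (hu (subset_insert a A))) (sub_nonneg.2 (hv (subset_insert a B))))
      (sub_nonneg.2 (hw (subset_insert a (S \ symmDiff A B))))
    linarith only [increments_nonneg]

theorem monotone_indicator_of_upward_closed {𝒰 : Finset (Finset E)}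
    (hU : ∀ A ∈ 𝒰, ∀ B : Finset E, A ⊆ B → B ∈ 𝒰) :
    Monotone fun A => if A ∈ 𝒰 then (1 : ℚ) else 0 := by
  intro A B h
  have := hU A
  dsimp only
  split_ifs <;> grind

variable [Fintype E]

/-- A coloring is determined by its sets `E_{ab}` and `E_{ac}`, which are arbitrary. -/
def coloringEquiv : (E → Fin 4) ≃ Finset E × Finset E where
  toFun f := (Est f 0 1, Est f 0 2)
  invFun p e := if e ∈ p.1 then (if e ∈ p.2 then 0 else 1) else (if e ∈ p.2 then 2 else 3)
  left_inv f := by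
    funext e
    simp only [Est, mem_filter, mem_univ, true_and]
    generalize f e = i
    revert i
    decide
  right_inv p := by
    ext e <;> simp only [Est, mem_filter, mem_univ, true_and] <;> split_ifs <;> simp_all

theorem Est_zero_three (f : E → Fin 4) :
    Est f 0 3 = univ \ symmDiff (Est f 0 1) (Est f 0 2) := by
  ext e
  simp only [Est, mem_filter, mem_univ, true_and, mem_sdiff, mem_symmDiff]
  generalize f e = i
  revert i
  decide

theorem sum_coloring (g : Finset E → Finset E → Finset E → ℚ) :
    ∑ f : E → Fin 4, g (Est f 0 1) (Est f 0 2) (Est f 0 3) =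
      ∑ A : Finset E, ∑ B : Finset E, g A B (univ \ symmDiff A B) := by
  rw [← Fintype.sum_prod_type' fun A B : Finset E => g A B (univ \ symmDiff A B)]
  exact Fintype.sum_equiv coloringEquiv _ _ fun f => by rw [Est_zero_three f]; rfl

theorem sum_coloring_Est_zero_one (g : Finset E → ℚ) :
    ∑ f : E → Fin 4, g (Est f 0 1) = 2 ^ Fintype.card E * ∑ A : Finset E, g A := by
  rw [sum_coloring fun A _ _ => g A]
  simp [mul_sum]

theorem sum_coloring_Est_zero_two (g : Finset E → ℚ) :
    ∑ f : E → Fin 4, g (Est f 0 2) = 2 ^ Fintype.card E * ∑ A : Finset E, g A := by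
  rw [sum_coloring fun _ B _ => g B]
  simp

theorem sum_coloring_Est_zero_three (g : Finset E → ℚ) :
    ∑ f : E → Fin 4, g (Est f 0 3) = 2 ^ Fintype.card E * ∑ A : Finset E, g A := by
  rw [sum_coloring fun _ _ C => g C]
  have sum_agreement : ∀ A : Finset E,
      ∑ B : Finset E, g (univ \ symmDiff A B) = ∑ B : Finset E, g B := by
    intro A
    have involutive : Function.Involutive fun B : Finset E => univ \ symmDiff A B := by
      intro B
      ext e
      simp only [mem_sdiff, mem_univ, mem_symmDiff, true_and]
      tauto
    exact Fintype.sum_equiv involutive.toPerm _ _ fun B => rfl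
  simp [sum_agreement]

end ColoredPercolation

/-- For a uniformly random 4-coloring of a finite set `E` and closed upward families
`𝒰, 𝒱, 𝒲`, the events `E_{ab}(f) ∈ 𝒰`, `E_{ac}(f) ∈ 𝒱`, `E_{ad}(f) ∈ 𝒲` are
positively dependent:
`P(𝒰_{ab} ∩ 𝒱_{ac} ∩ 𝒲_{ad}) ≥ P(𝒰_{ab}) · P(𝒱_{ac}) · P(𝒲_{ad})`. -/
theorem colored_percolation_upward_pos_dep (E : Type*) [Fintype E] [DecidableEq E]
    (𝒰 𝒱 𝒲 : Finset (Finset E))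
    (hU : ∀ A ∈ 𝒰, ∀ B : Finset E, A ⊆ B → B ∈ 𝒰)
    (hV : ∀ A ∈ 𝒱, ∀ B : Finset E, A ⊆ B → B ∈ 𝒱)
    (hW : ∀ A ∈ 𝒲, ∀ B : Finset E, A ⊆ B → B ∈ 𝒲) :
    ((Finset.univ.filter (fun f : E → Fin 4 =>
        Est f 0 1 ∈ 𝒰 ∧ Est f 0 2 ∈ 𝒱 ∧ Est f 0 3 ∈ 𝒲)).card : ℚ)
        / 4 ^ Fintype.card E
      ≥ (((Finset.univ.filter (fun f : E → Fin 4 => Est f 0 1 ∈ 𝒰)).card : ℚ)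
            / 4 ^ Fintype.card E)
        * (((Finset.univ.filter (fun f : E → Fin 4 => Est f 0 2 ∈ 𝒱)).card : ℚ)
            / 4 ^ Fintype.card E)
        * (((Finset.univ.filter (fun f : E → Fin 4 => Est f 0 3 ∈ 𝒲)).card : ℚ)
            / 4 ^ Fintype.card E) := by
  have key := sum_powerset_mul_sum_mul_sum_le univ _ _ _
    (monotone_indicator_of_upward_closed hU) (monotone_indicator_of_upward_closed hV)
    (monotone_indicator_of_upward_closed hW)
  rw [powerset_univ, card_univ, ← sum_coloring fun A B C =>
    (if A ∈ 𝒰 then (1 : ℚ) else 0) * (if B ∈ 𝒱 then 1 else 0) * (if C ∈ 𝒲 then 1 else 0)] at key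
  simp only [card_filter, Nat.cast_sum, Nat.cast_ite, Nat.cast_one, Nat.cast_zero]
  rw [sum_coloring_Est_zero_one fun A => if A ∈ 𝒰 then (1 : ℚ) else 0,
    sum_coloring_Est_zero_two fun A => if A ∈ 𝒱 then (1 : ℚ) else 0,
    sum_coloring_Est_zero_three fun A => if A ∈ 𝒲 then (1 : ℚ) else 0]
  have joint : ∀ f : E → Fin 4,
      (if Est f 0 1 ∈ 𝒰 ∧ Est f 0 2 ∈ 𝒱 ∧ Est f 0 3 ∈ 𝒲 then (1 : ℚ) else 0) =
        (if Est f 0 1 ∈ 𝒰 then 1 else 0) * (if Est f 0 2 ∈ 𝒱 then 1 else 0) *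
          (if Est f 0 3 ∈ 𝒲 then 1 else 0) := by
    intro f
    by_cases h₁ : Est f 0 1 ∈ 𝒰 <;> by_cases h₂ : Est f 0 2 ∈ 𝒱 <;> simp [h₁, h₂]
  rw [sum_congr rfl fun f _ => joint f]
  have four_pow : (4 : ℚ) ^ Fintype.card E = 2 ^ Fintype.card E * 2 ^ Fintype.card E := by
    rw [← mul_pow]; norm_num
  have two_pow_pos : (0 : ℚ) < 2 ^ Fintype.card E := by positivity
  rw [four_pow, mul_div_mul_left _ _ two_pow_pos.ne', mul_div_mul_left _ _ two_pow_pos.ne',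
    mul_div_mul_left _ _ two_pow_pos.ne', div_mul_div_comm, div_mul_div_comm, ge_iff_le,
    div_le_div_iff₀ (by positivity) (by positivity), mul_comm (_ * _ * _) (_ * _)]
  refine (mul_le_mul_of_nonneg_left key (by positivity)).trans_eq ?_
  ring
end

section
/- Let E be a finite set, let k ≥ 1, and let f : E → ({0,1}^k) be chosen uniformly at random (equivalently, S_1, …, S_k are independent uniform random subsets of E, S_i := {e ∈ E : f(e)_i = 1}). Define S_{k+1} := {e ∈ E : the number of indices i ∈ {1,…,k} with e ∈ S_i is odd} (the mod-2 sum of S_1,…,S_k). Then for any closed downward families 𝒳_1, …, 𝒳_{k+1} of subsets of E, P(S_1 ∈ 𝒳_1 and … and S_{k+1} ∈ 𝒳_{k+1}) ≥ P(S_1 ∈ 𝒳_1) · ⋯ · P(S_{k+1} ∈ 𝒳_{k+1}). -/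
open Finset

/-- Given `f : E → ({0,1}^k)`, `Ssub f i` for `i < k` is the `i`-th coordinate random subset
`S_i = {e : f(e)_i = 1}`, and `Ssub f (Fin.last k)` is the mod-2 sum
`S_{k+1} = {e : e lies in an odd number of the S_i}`. -/
def Ssub {E : Type*} [Fintype E] [DecidableEq E] {k : ℕ}
    (f : E → (Fin k → Bool)) (i : Fin (k + 1)) : Finset E :=
  if h : (i : ℕ) < k then
    Finset.univ.filter (fun e => f e ⟨(i : ℕ), h⟩ = true)
  else
    Finset.univ.filter (fun e => Odd ((Finset.univ.filter (fun j => f e j = true)).card))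

/-- The vector `v` of `k` bits followed by its parity bit. -/
def appendParity {k : ℕ} (v : Fin k → Bool) (i : Fin (k + 1)) : Bool :=
  if h : (i : ℕ) < k then v ⟨i, h⟩ else decide (Odd (univ.filter fun j => v j = true).card)

/-- The nontrivial character of `Bool`, viewed as the group of order two. -/
def boolSign (b : Bool) : ℚ := if b then -1 else 1

lemma boolSign_mul_self (b : Bool) : boolSign b * boolSign b = 1 := by
  cases b <;> simp [boolSign]

@[simp] lemma appendParity_castSucc {k : ℕ} (v : Fin k → Bool) (j : Fin k) :
    appendParity v j.castSucc = v j := by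
  simp [appendParity]

lemma boolSign_appendParity_last {k : ℕ} (v : Fin k → Bool) :
    boolSign (appendParity v (Fin.last k)) = ∏ j, boolSign (v j) := by
  simp only [boolSign, prod_ite, prod_const, one_pow, mul_one]
  rcases Nat.even_or_odd (univ.filter fun j => v j = true).card with h | h
  · simp [appendParity, h.neg_one_pow, h]
  · simp [appendParity, h.neg_one_pow, h]

lemma sum_prod_bool_apply {k : ℕ} (F : Fin k → Bool → ℚ) :
    ∑ v : Fin k → Bool, ∏ j, F j (v j) = ∏ j, (F j true + F j false) := by
  simp [← Fintype.prod_sum]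

lemma sum_prod_affine_appendParity {k : ℕ} (m d : Fin (k + 1) → ℚ) :
    ∑ v : Fin k → Bool, ∏ i, (m i + d i * boolSign (appendParity v i))
      = 2 ^ k * (∏ i, m i + ∏ i, d i) := by
  have expand (v : Fin k → Bool) : ∏ i, (m i + d i * boolSign (appendParity v i))
      = m (Fin.last k) * ∏ j : Fin k, (m j.castSucc + d j.castSucc * boolSign (v j))
        + d (Fin.last k) * ∏ j : Fin k, (m j.castSucc * boolSign (v j) + d j.castSucc) := by
    have twist : ∏ j : Fin k, (m j.castSucc * boolSign (v j) + d j.castSucc)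
        = (∏ j : Fin k, (m j.castSucc + d j.castSucc * boolSign (v j)))
          * ∏ j, boolSign (v j) := by
      rw [← prod_mul_distrib]
      refine prod_congr rfl fun j _ => ?_
      linear_combination -d j.castSucc * boolSign_mul_self (v j)
    rw [Fin.prod_univ_castSucc, boolSign_appendParity_last, twist]
    simp only [appendParity_castSucc]
    ring
  simp only [expand, sum_add_distrib, ← mul_sum]
  rw [sum_prod_bool_apply fun j b => m j.castSucc + d j.castSucc * boolSign b,
    sum_prod_bool_apply fun j b => m j.castSucc * boolSign b + d j.castSucc,
    Fin.prod_univ_castSucc m, Fin.prod_univ_castSucc d]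
  have hm (j : Fin k) : m j.castSucc + d j.castSucc * boolSign true
      + (m j.castSucc + d j.castSucc * boolSign false) = 2 * m j.castSucc := by
    simp [boolSign]; ring
  have hd (j : Fin k) : m j.castSucc * boolSign true + d j.castSucc
      + (m j.castSucc * boolSign false + d j.castSucc) = 2 * d j.castSucc := by
    simp [boolSign]; ring
  simp only [hm, hd, prod_mul_distrib, prod_const, card_univ, Fintype.card_fin]
  ring

lemma sum_affine_appendParity {k : ℕ} (hk : 1 ≤ k) (i : Fin (k + 1)) (m d : ℚ) :
    ∑ v : Fin k → Bool, (m + d * boolSign (appendParity v i)) = 2 ^ k * m := by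
  have h := sum_prod_affine_appendParity (k := k)
    (fun j => if j = i then m else 1) (fun j => if j = i then d else 0)
  have : Nontrivial (Fin (k + 1)) := Fin.nontrivial_iff_two_le.mpr (by omega)
  obtain ⟨j, hj⟩ := exists_ne i
  have hd : ∏ j, (if j = i then d else 0) = 0 := prod_eq_zero (mem_univ j) (if_neg hj)
  rw [hd, Fintype.prod_ite_eq' i fun _ => m, add_zero] at h
  rw [← h]
  refine sum_congr rfl fun v _ => ?_
  rw [Fintype.prod_eq_single i fun j hj => by simp [hj]]
  simp

/-- The correlation inequality on a one-point ground set. -/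
lemma prod_sum_appendParity_le {k : ℕ} (hk : 1 ≤ k) (G : Fin (k + 1) → Bool → ℚ)
    (hG : ∀ i, Antitone (G i)) :
    ∏ i, ∑ v : Fin k → Bool, G i (appendParity v i)
      ≤ (2 ^ k) ^ k * ∑ v : Fin k → Bool, ∏ i, G i (appendParity v i) := by
  have affine (i : Fin (k + 1)) (b : Bool) : G i b
      = (G i false + G i true) / 2 + (G i false - G i true) / 2 * boolSign b := by
    cases b <;> simp [boolSign] <;> ring
  have hd : 0 ≤ ∏ i, (G i false - G i true) / 2 :=
    prod_nonneg fun i _ => div_nonneg (sub_nonneg.mpr (hG i (Bool.false_le true))) (by norm_num)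
  have sum_eq (i : Fin (k + 1)) : ∑ v : Fin k → Bool, G i (appendParity v i)
      = 2 ^ k * ((G i false + G i true) / 2) := by
    rw [← sum_affine_appendParity hk i _ ((G i false - G i true) / 2)]
    exact sum_congr rfl fun v _ => affine i _
  have sum_prod_eq : ∑ v : Fin k → Bool, ∏ i, G i (appendParity v i)
      = 2 ^ k * (∏ i, (G i false + G i true) / 2 + ∏ i, (G i false - G i true) / 2) := by
    rw [← sum_prod_affine_appendParity]
    exact sum_congr rfl fun v _ => prod_congr rfl fun i _ => affine i _
  simp only [sum_eq]
  rw [sum_prod_eq, prod_mul_distrib, prod_const, card_univ, Fintype.card_fin, pow_succ,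
    ← mul_assoc]
  exact mul_le_mul_of_nonneg_left (le_add_of_nonneg_right hd) (by positivity)

/-- Antitone functions of uniform random vectors of bits and of their mod-2 sum
are positively correlated. -/
lemma prod_sum_le_sum_prod_of_antitone {k : ℕ} (hk : 1 ≤ k) (E : Type*) [Fintype E]
    [DecidableEq E] (g : Fin (k + 1) → (E → Bool) → ℚ) (hg : ∀ i, Antitone (g i)) :
    ∏ i, ∑ f : E → Fin k → Bool, g i (fun e => appendParity (f e) i)
      ≤ (2 ^ (k * Fintype.card E)) ^ k
        * ∑ f : E → Fin k → Bool, ∏ i, g i (fun e => appendParity (f e) i) := by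
  suffices H : ∀ (n : ℕ) (g : Fin (k + 1) → (Fin n → Bool) → ℚ), (∀ i, Antitone (g i)) →
      ∏ i, ∑ f : Fin n → Fin k → Bool, g i (fun e => appendParity (f e) i)
        ≤ (2 ^ (k * n)) ^ k
          * ∑ f : Fin n → Fin k → Bool, ∏ i, g i (fun e => appendParity (f e) i) by
    let e := Fintype.equivFin E
    have reindex (F : (E → Fin k → Bool) → ℚ) :
        ∑ f : Fin (Fintype.card E) → Fin k → Bool, F (f ∘ e) = ∑ f, F f :=
      (e.symm.arrowCongr (Equiv.refl (Fin k → Bool))).sum_comp F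
    have h := H (Fintype.card E) (fun i s => g i (s ∘ e))
      fun i s t hst => hg i fun x => hst (e x)
    rw [← reindex]
    simp only [← reindex fun f => g _ (fun x => appendParity (f x) _)]
    exact h
  intro n
  induction n with
  | zero => intro g _; simp
  | succ n ih =>
    intro g hg
    have split (F : (Fin (n + 1) → Fin k → Bool) → ℚ) :
        ∑ f, F f = ∑ v, ∑ f : Fin n → Fin k → Bool, F (Fin.cons v f) := by
      rw [← (Fin.consEquiv fun _ => Fin k → Bool).sum_comp, Fintype.sum_prod_type]
      rfl
    have cons_apply (v : Fin k → Bool) (f : Fin n → Fin k → Bool) (i : Fin (k + 1)) :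
        (fun e => appendParity ((Fin.cons v f : Fin (n + 1) → Fin k → Bool) e) i)
          = Fin.cons (appendParity v i) (fun e => appendParity (f e) i) := by
      funext e
      refine Fin.cases ?_ (fun e => ?_) e <;> simp
    simp only [split, cons_apply]
    calc ∏ i, ∑ v : Fin k → Bool, ∑ f : Fin n → Fin k → Bool,
          g i (Fin.cons (appendParity v i) fun e => appendParity (f e) i)
        ≤ (2 ^ k) ^ k * ∑ v : Fin k → Bool, ∏ i, ∑ f : Fin n → Fin k → Bool,
          g i (Fin.cons (appendParity v i) fun e => appendParity (f e) i) :=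
          prod_sum_appendParity_le hk
            (fun i b => ∑ f : Fin n → Fin k → Bool,
              g i (Fin.cons b fun e => appendParity (f e) i))
            fun i b c hbc => sum_le_sum fun f _ => hg i (Fin.cons_le_cons.mpr ⟨hbc, le_rfl⟩)
      _ ≤ (2 ^ k) ^ k * ∑ v : Fin k → Bool, (2 ^ (k * n)) ^ k
          * ∑ f : Fin n → Fin k → Bool, ∏ i,
            g i (Fin.cons (appendParity v i) fun e => appendParity (f e) i) := by
          gcongr with v
          exact ih (fun i s => g i (Fin.cons (appendParity v i) s))
            fun i s t hst => hg i (Fin.cons_le_cons.mpr ⟨le_rfl, hst⟩)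
      _ = _ := by
          rw [← mul_sum, ← mul_assoc, ← mul_pow, ← pow_add, mul_add, mul_one, add_comm k]

lemma Ssub_eq_filter_appendParity {E : Type*} [Fintype E] [DecidableEq E] {k : ℕ}
    (f : E → Fin k → Bool) (i : Fin (k + 1)) :
    Ssub f i = univ.filter fun e => appendParity (f e) i = true := by
  unfold Ssub appendParity
  split_ifs <;> simp

/-- For `k` independent uniform random subsets `S_1, …, S_k` of a finite set `E` together
with their mod-2 sum `S_{k+1}`, and closed downward families `𝒳_1, …, 𝒳_{k+1}`:
`P(S_1 ∈ 𝒳_1, …, S_{k+1} ∈ 𝒳_{k+1}) ≥ P(S_1 ∈ 𝒳_1) ⋯ P(S_{k+1} ∈ 𝒳_{k+1})`. -/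
theorem multi_percolation_downward_pos_dep (E : Type*) [Fintype E] [DecidableEq E]
    (k : ℕ) (hk : 1 ≤ k) (𝒳 : Fin (k + 1) → Finset (Finset E))
    (hX : ∀ i, ∀ A ∈ 𝒳 i, ∀ B : Finset E, B ⊆ A → B ∈ 𝒳 i) :
    ((Finset.univ.filter
        (fun f : E → (Fin k → Bool) => ∀ i, Ssub f i ∈ 𝒳 i)).card : ℚ)
        / 2 ^ (k * Fintype.card E)
      ≥ ∏ i : Fin (k + 1),
          ((Finset.univ.filter
            (fun f : E → (Fin k → Bool) => Ssub f i ∈ 𝒳 i)).card : ℚ)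
            / 2 ^ (k * Fintype.card E) := by
  let g (i : Fin (k + 1)) (s : E → Bool) : ℚ :=
    if univ.filter (fun e => s e = true) ∈ 𝒳 i then 1 else 0
  have hg (i : Fin (k + 1)) : Antitone (g i) := by
    intro s t hst
    have hsub : univ.filter (fun e => s e = true) ⊆ univ.filter (fun e => t e = true) :=
      monotone_filter_right _ fun e _ he => hst e he
    by_cases ht : univ.filter (fun e => t e = true) ∈ 𝒳 i
    · simp [g, ht, hX i _ ht _ hsub]
    · simp only [g, ht, if_false]
      split_ifs <;> norm_num
  have h := prod_sum_le_sum_prod_of_antitone hk E g hg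
  have card_one (i : Fin (k + 1)) :
      ((univ.filter fun f : E → Fin k → Bool => Ssub f i ∈ 𝒳 i).card : ℚ)
        = ∑ f : E → Fin k → Bool, g i (fun e => appendParity (f e) i) := by
    simp [g, Ssub_eq_filter_appendParity]
  have card_all : ((univ.filter fun f : E → Fin k → Bool => ∀ i, Ssub f i ∈ 𝒳 i).card : ℚ)
      = ∑ f : E → Fin k → Bool, ∏ i, g i (fun e => appendParity (f e) i) := by
    simp [g, Ssub_eq_filter_appendParity, prod_ite_zero]
  simp only [card_one, card_all, prod_div_distrib, prod_const, card_univ, Fintype.card_fin]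
  rw [ge_iff_le, div_le_div_iff₀ (by positivity) (by positivity)]
  calc _ ≤ _ := mul_le_mul_of_nonneg_right h (by positivity)
    _ = _ := by ring
end

section
/- Let E be a finite set and let f : E → {1,2,3,4,5,6,7,8} be a uniformly random coloring. For a set S of colors write E_S(f) := f⁻¹(S). Then for any closed downward families 𝒰, 𝒱, 𝒲, 𝒳 of subsets of E, P(E_{{1,2,3,4}}(f) ∈ 𝒰 and E_{{1,2,5,6}}(f) ∈ 𝒱 and E_{{1,3,5,7}}(f) ∈ 𝒲 and E_{{1,4,6,7}}(f) ∈ 𝒳) ≥ P(E_{{1,2,3,4}}(f) ∈ 𝒰) · P(E_{{1,2,5,6}}(f) ∈ 𝒱) · P(E_{{1,3,5,7}}(f) ∈ 𝒲) · P(E_{{1,4,6,7}}(f) ∈ 𝒳). -/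
open Finset

/-- `ES f S` is the set of elements whose color under `f` lies in the color set `S`.
Colors `{1,…,8}` are represented by `Fin 8 = {0,…,7}`. -/
def ES {E : Type*} [Fintype E] [DecidableEq E] (f : E → Fin 8) (S : Finset (Fin 8)) :
    Finset E :=
  Finset.univ.filter (fun e => f e ∈ S)

/-- A sum over colorings, split off at the first coordinate. -/
lemma sum_coloring_cons {n : ℕ} (F : (Fin (n + 1) → Fin 8) → ℚ) :
    ∑ f, F f = ∑ f : Fin n → Fin 8, ∑ c : Fin 8, F (Fin.cons c f) := by
  rw [← (Fin.consEquiv fun _ : Fin (n + 1) => Fin 8).sum_comp, Fintype.sum_prod_type, sum_comm]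
  rfl

lemma comp_cons {α β : Type*} {n : ℕ} (p : α → β) (c : α) (f : Fin n → α) :
    (fun i => p ((Fin.cons c f : Fin (n + 1) → α) i)) =
      (Fin.cons (p c) (fun i => p (f i)) : Fin (n + 1) → β) := by
  funext i
  refine Fin.cases ?_ (fun j => ?_) i <;> simp

lemma antitone_comp_cons {n : ℕ} {U : (Fin (n + 1) → Bool) → ℚ} (hU : Antitone U) (b : Bool) :
    Antitone fun x : Fin n → Bool => U (Fin.cons b x) :=
  fun _ _ h => hU (Fin.cons_le_cons.2 ⟨le_rfl, h⟩)

lemma cons_true_le_cons_false {n : ℕ} {U : (Fin (n + 1) → Bool) → ℚ} (hU : Antitone U)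
    (x : Fin n → Bool) : U (Fin.cons true x) ≤ U (Fin.cons false x) :=
  hU (Fin.cons_le_cons.2 ⟨Bool.false_le _, le_rfl⟩)

/-- Positive dependence for antitone functions of the four percolations. Splitting off one
coordinate and writing each function as average plus half-difference, the mixed terms cancel and
the product of the half-differences is nonnegative. -/
theorem antitone_pos_dep (n : ℕ) (U V W X : (Fin n → Bool) → ℚ)
    (hU : Antitone U) (hV : Antitone V) (hW : Antitone W) (hX : Antitone X) :
    (∑ f : Fin n → Fin 8, U fun i => decide (f i ∈ ({0, 1, 2, 3} : Finset (Fin 8)))) *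
      (∑ f : Fin n → Fin 8, V fun i => decide (f i ∈ ({0, 1, 4, 5} : Finset (Fin 8)))) *
      (∑ f : Fin n → Fin 8, W fun i => decide (f i ∈ ({0, 2, 4, 6} : Finset (Fin 8)))) *
      (∑ f : Fin n → Fin 8, X fun i => decide (f i ∈ ({0, 3, 5, 6} : Finset (Fin 8)))) ≤
    (8 ^ n) ^ 3 * ∑ f : Fin n → Fin 8,
      (U fun i => decide (f i ∈ ({0, 1, 2, 3} : Finset (Fin 8)))) *
      (V fun i => decide (f i ∈ ({0, 1, 4, 5} : Finset (Fin 8)))) *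
      (W fun i => decide (f i ∈ ({0, 2, 4, 6} : Finset (Fin 8)))) *
      (X fun i => decide (f i ∈ ({0, 3, 5, 6} : Finset (Fin 8)))) := by
  induction n with
  | zero => simp
  | succ n ih =>
    let s (Y : (Fin (n + 1) → Bool) → ℚ) (x : Fin n → Bool) : ℚ :=
      Y (Fin.cons false x) + Y (Fin.cons true x)
    have hs {Y : (Fin (n + 1) → Bool) → ℚ} (hY : Antitone Y) : Antitone (s Y) :=
      (antitone_comp_cons hY false).add (antitone_comp_cons hY true)
    have key := ih (s U) (s V) (s W) (s X) (hs hU) (hs hV) (hs hW) (hs hX)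
    have marginal (Y : (Fin (n + 1) → Bool) → ℚ) (S : Finset (Fin 8)) (hS : #S = 4) :
        ∑ f : Fin (n + 1) → Fin 8, Y (fun i => decide (f i ∈ S)) =
          4 * ∑ f : Fin n → Fin 8, s Y fun i => decide (f i ∈ S) := by
      rw [sum_coloring_cons, mul_sum]
      refine sum_congr rfl fun f _ => ?_
      simp only [comp_cons fun c => decide (c ∈ S)]
      have hc : #(univ.filter fun c => c ∉ S) = 4 := by
        rw [← compl_filter, card_compl]; simp [hS]
      rw [← sum_filter_add_sum_filter_not univ (fun c => c ∈ S),
        sum_congr rfl (g := fun _ => Y (Fin.cons true fun i => decide (f i ∈ S)))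
          (by simp +contextual),
        sum_congr (s₁ := univ.filter fun c => c ∉ S) rfl
          (g := fun _ => Y (Fin.cons false fun i => decide (f i ∈ S))) (by simp +contextual)]
      simp only [sum_const, hc, filter_univ_mem, hS, s]
      simp only [nsmul_eq_mul]
      push_cast
      ring
    rw [marginal U _ rfl, marginal V _ rfl, marginal W _ rfl, marginal X _ rfl]
    have joint : (∑ f : Fin n → Fin 8,
        (s U fun i => decide (f i ∈ ({0, 1, 2, 3} : Finset (Fin 8)))) *
        (s V fun i => decide (f i ∈ ({0, 1, 4, 5} : Finset (Fin 8)))) *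
        (s W fun i => decide (f i ∈ ({0, 2, 4, 6} : Finset (Fin 8)))) *
        (s X fun i => decide (f i ∈ ({0, 3, 5, 6} : Finset (Fin 8))))) ≤
      2 * ∑ f : Fin (n + 1) → Fin 8,
        (U fun i => decide (f i ∈ ({0, 1, 2, 3} : Finset (Fin 8)))) *
        (V fun i => decide (f i ∈ ({0, 1, 4, 5} : Finset (Fin 8)))) *
        (W fun i => decide (f i ∈ ({0, 2, 4, 6} : Finset (Fin 8)))) *
        (X fun i => decide (f i ∈ ({0, 3, 5, 6} : Finset (Fin 8)))) := by
      rw [sum_coloring_cons, mul_sum]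
      refine sum_le_sum fun f _ => ?_
      simp only [comp_cons fun c => decide (c ∈ ({0, 1, 2, 3} : Finset (Fin 8))),
        comp_cons fun c => decide (c ∈ ({0, 1, 4, 5} : Finset (Fin 8))),
        comp_cons fun c => decide (c ∈ ({0, 2, 4, 6} : Finset (Fin 8))),
        comp_cons fun c => decide (c ∈ ({0, 3, 5, 6} : Finset (Fin 8)))]
      generalize (fun i => decide (f i ∈ ({0, 1, 2, 3} : Finset (Fin 8)))) = u
      generalize (fun i => decide (f i ∈ ({0, 1, 4, 5} : Finset (Fin 8)))) = v
      generalize (fun i => decide (f i ∈ ({0, 2, 4, 6} : Finset (Fin 8)))) = w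
      generalize (fun i => decide (f i ∈ ({0, 3, 5, 6} : Finset (Fin 8)))) = x
      have hdiff := mul_nonneg (mul_nonneg (mul_nonneg
        (sub_nonneg.2 (cons_true_le_cons_false hU u))
        (sub_nonneg.2 (cons_true_le_cons_false hV v)))
        (sub_nonneg.2 (cons_true_le_cons_false hW w)))
        (sub_nonneg.2 (cons_true_le_cons_false hX x))
      rw [Fin.sum_univ_eight]
      simp only [Fin.isValue, mem_insert, mem_singleton, Fin.reduceEq, or_true, or_false,
        decide_true, decide_false, s]
      linarith
    have := mul_le_mul_of_nonneg_left joint (by positivity : (0 : ℚ) ≤ (8 ^ n) ^ 3)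
    rw [pow_succ (8 : ℚ) n, mul_pow]
    linarith

/-- A lower family, as an antitone indicator on indicator vectors indexed by `Fin n`. -/
lemma antitone_indicator {E : Type*} [Fintype E] [DecidableEq E] {n : ℕ} (σ : E ≃ Fin n)
    (𝒜 : Finset (Finset E)) (h𝒜 : ∀ A ∈ 𝒜, ∀ B : Finset E, B ⊆ A → B ∈ 𝒜) :
    Antitone fun x : Fin n → Bool => if univ.filter (fun e => x (σ e)) ∈ 𝒜 then (1 : ℚ) else 0 := by
  intro x y hxy
  dsimp only
  have hsub : univ.filter (fun e => x (σ e)) ⊆ univ.filter (fun e => y (σ e)) :=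
    fun e he => by
      simp only [mem_filter, mem_univ, true_and] at he ⊢
      exact hxy (σ e) he
  by_cases hy : univ.filter (fun e => y (σ e)) ∈ 𝒜
  · rw [if_pos hy, if_pos (h𝒜 _ hy _ hsub)]
  · rw [if_neg hy]
    split_ifs <;> norm_num

/-- For a uniformly random 8-coloring of a finite set `E` and closed downward families
`𝒰, 𝒱, 𝒲, 𝒳`, with the four pairwise independent ½-percolations `E_{1234}`, `E_{1256}`,
`E_{1357}`, `E_{1467}` (colors shifted to `{0,…,7}`):
`P(𝒰 ∩ 𝒱 ∩ 𝒲 ∩ 𝒳) ≥ P(𝒰) · P(𝒱) · P(𝒲) · P(𝒳)`. -/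
theorem eight_color_downward_pos_dep (E : Type*) [Fintype E] [DecidableEq E]
    (𝒰 𝒱 𝒲 𝒳 : Finset (Finset E))
    (hU : ∀ A ∈ 𝒰, ∀ B : Finset E, B ⊆ A → B ∈ 𝒰)
    (hV : ∀ A ∈ 𝒱, ∀ B : Finset E, B ⊆ A → B ∈ 𝒱)
    (hW : ∀ A ∈ 𝒲, ∀ B : Finset E, B ⊆ A → B ∈ 𝒲)
    (hX : ∀ A ∈ 𝒳, ∀ B : Finset E, B ⊆ A → B ∈ 𝒳) :
    ((Finset.univ.filter (fun f : E → Fin 8 =>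
        ES f {0, 1, 2, 3} ∈ 𝒰 ∧ ES f {0, 1, 4, 5} ∈ 𝒱 ∧
        ES f {0, 2, 4, 6} ∈ 𝒲 ∧ ES f {0, 3, 5, 6} ∈ 𝒳)).card : ℚ)
        / 8 ^ Fintype.card E
      ≥ (((Finset.univ.filter (fun f : E → Fin 8 => ES f {0, 1, 2, 3} ∈ 𝒰)).card : ℚ)
            / 8 ^ Fintype.card E)
        * (((Finset.univ.filter (fun f : E → Fin 8 => ES f {0, 1, 4, 5} ∈ 𝒱)).card : ℚ)
            / 8 ^ Fintype.card E)
        * (((Finset.univ.filter (fun f : E → Fin 8 => ES f {0, 2, 4, 6} ∈ 𝒲)).card : ℚ)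
            / 8 ^ Fintype.card E)
        * (((Finset.univ.filter (fun f : E → Fin 8 => ES f {0, 3, 5, 6} ∈ 𝒳)).card : ℚ)
            / 8 ^ Fintype.card E) := by
  let σ := Fintype.equivFin E
  let I (𝒜 : Finset (Finset E)) (x : Fin (Fintype.card E) → Bool) : ℚ :=
    if univ.filter (fun e => x (σ e)) ∈ 𝒜 then 1 else 0
  have hI (𝒜 : Finset (Finset E)) (S : Finset (Fin 8)) (f : E → Fin 8) :
      I 𝒜 (fun i => decide (f (σ.symm i) ∈ S)) = if ES f S ∈ 𝒜 then 1 else 0 := by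
    have h : univ.filter (fun e => decide (f (σ.symm (σ e)) ∈ S) = true) = ES f S := by
      ext e
      simp [ES]
    simp only [I, h]
  have transport (F : (Fin (Fintype.card E) → Fin 8) → ℚ) :
      ∑ f, F f = ∑ f : E → Fin 8, F (fun i => f (σ.symm i)) :=
    ((σ.arrowCongr (Equiv.refl (Fin 8))).sum_comp F).symm
  have key := antitone_pos_dep (Fintype.card E) (I 𝒰) (I 𝒱) (I 𝒲) (I 𝒳)
    (antitone_indicator σ 𝒰 hU) (antitone_indicator σ 𝒱 hV)
    (antitone_indicator σ 𝒲 hW) (antitone_indicator σ 𝒳 hX)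
  simp only [transport, hI, ite_zero_mul_ite_zero, mul_one, sum_boole, and_assoc] at key
  rw [ge_iff_le, div_mul_div_comm, div_mul_div_comm, div_mul_div_comm,
    div_le_div_iff₀ (by positivity) (by positivity)]
  have := mul_le_mul_of_nonneg_right key (by positivity : (0 : ℚ) ≤ 8 ^ Fintype.card E)
  linarith
end

section
/- For each m ≥ 0 let E_m be a finite set with |E_m| = 2m+1, let f : E_m → {a,b,c,d} be a uniformly random coloring, and let 𝒰_m := {A ⊆ E_m : |A| > m} be the majority family. Then the probability P(|E_{ab}(f)| > m and |E_{ac}(f)| > m and |E_{bc}(f)| > m) converges to 1/8 as m → ∞. -/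
open Finset

namespace SignCube

variable {E : Type*}

/-- The Walsh character indexed by `S`. -/
def walsh (S : Finset E) (x : E → ℤˣ) : ℝ := ∏ i ∈ S, ((x i : ℤ) : ℝ)

lemma walsh_mul (S : Finset E) (x y : E → ℤˣ) : walsh S (x * y) = walsh S x * walsh S y := by
  simp [walsh, Finset.prod_mul_distrib]

lemma abs_walsh (S : Finset E) (x : E → ℤˣ) : |walsh S x| = 1 := by
  rw [walsh, Finset.abs_prod]
  refine Finset.prod_eq_one fun i _ => ?_
  rcases Int.units_eq_one_or (x i) with h | h <;> simp [h]

lemma mul_self_eq_one (x : E → ℤˣ) : x * x = 1 := by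
  ext1 i
  exact Int.units_mul_self (x i)

lemma mul_eq_one_iff (x y : E → ℤˣ) : x * y = 1 ↔ y = x := by
  rw [mul_eq_one_iff_eq_inv', inv_eq_of_mul_eq_one_left (mul_self_eq_one x)]

variable [Fintype E]

/-- The number of coordinates of a sign vector equal to `1`. -/
def countPos (x : E → ℤˣ) : ℕ := #{i | x i = 1}

/-- The majority function with threshold `m` on sign vectors. -/
noncomputable def maj (m : ℕ) (x : E → ℤˣ) : ℝ := if m < countPos x then 1 else -1

lemma sum_walsh (x : E → ℤˣ) :
    ∑ S, walsh S x = if x = 1 then (2 : ℝ) ^ Fintype.card E else 0 := by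
  have key : ∑ S, walsh S x = ∏ i, (1 + ((x i : ℤ) : ℝ)) := by
    rw [Finset.prod_one_add, Finset.powerset_univ]
    rfl
  rw [key]
  split_ifs with h
  · subst h
    norm_num
  · obtain ⟨i, hi⟩ := Function.ne_iff.mp h
    refine Finset.prod_eq_zero (Finset.mem_univ i) ?_
    rcases Int.units_eq_one_or (x i) with h | h
    · exact absurd h hi
    · simp [h]

lemma maj_sq (m : ℕ) (x : E → ℤˣ) : maj m x ^ 2 = 1 := by
  unfold maj
  split_ifs <;> norm_num

lemma countPos_add_countPos_neg (x : E → ℤˣ) :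
    countPos x + countPos (-x) = Fintype.card E := by
  rw [← Finset.card_univ,
    ← Finset.card_filter_add_card_filter_not (s := Finset.univ) (fun i => x i = 1)]
  unfold countPos
  congr 2
  ext i
  rcases Int.units_eq_one_or (x i) with h | h <;> simp [h]

lemma maj_neg {m : ℕ} (hE : Fintype.card E = 2 * m + 1) (x : E → ℤˣ) :
    maj m (-x) = -maj m x := by
  have h := countPos_add_countPos_neg x
  unfold maj
  split_ifs <;> first | omega | norm_num

variable [DecidableEq E]

/-- The unnormalised Walsh coefficient of `f` at `S`. -/
noncomputable def coeff (f : (E → ℤˣ) → ℝ) (S : Finset E) : ℝ := ∑ x, f x * walsh S x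

/-- Parseval's identity on the sign cube. -/
lemma sum_coeff_sq (f : (E → ℤˣ) → ℝ) :
    ∑ S, coeff f S ^ 2 = 2 ^ Fintype.card E * ∑ x, f x ^ 2 := by
  calc ∑ S, coeff f S ^ 2 = ∑ S, ∑ x, ∑ y, f x * f y * walsh S (x * y) := by
        refine Finset.sum_congr rfl fun S _ => ?_
        rw [sq, coeff, Finset.sum_mul_sum]
        refine Finset.sum_congr rfl fun x _ => Finset.sum_congr rfl fun y _ => ?_
        rw [walsh_mul]
        ring
    _ = ∑ x, ∑ y, f x * f y * ∑ S, walsh S (x * y) := by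
        rw [Finset.sum_comm]
        refine Finset.sum_congr rfl fun x _ => ?_
        rw [Finset.sum_comm]
        simp_rw [Finset.mul_sum]
    _ = _ := by
        simp_rw [sum_walsh, mul_eq_one_iff, mul_ite, mul_zero,
          Finset.sum_ite_eq', Finset.mem_univ, if_true, Finset.mul_sum]
        refine Finset.sum_congr rfl fun x _ => ?_
        ring

/-- The sum of cubes of Walsh coefficients as a correlation over multiplicative triples. -/
lemma sum_coeff_cube (f : (E → ℤˣ) → ℝ) :
    ∑ S, coeff f S ^ 3 = 2 ^ Fintype.card E * ∑ x, ∑ y, f x * f y * f (x * y) := by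
  calc ∑ S, coeff f S ^ 3
      = ∑ S, ∑ x, ∑ y, ∑ z, f x * f y * f z * walsh S (x * y * z) := by
        refine Finset.sum_congr rfl fun S _ => ?_
        rw [pow_succ, sq, coeff, Finset.sum_mul_sum, Finset.sum_mul]
        refine Finset.sum_congr rfl fun x _ => ?_
        rw [Finset.sum_mul_sum]
        refine Finset.sum_congr rfl fun y _ => Finset.sum_congr rfl fun z _ => ?_
        rw [walsh_mul, walsh_mul]
        ring
    _ = ∑ x, ∑ y, ∑ z, f x * f y * f z * ∑ S, walsh S (x * y * z) := by
        rw [Finset.sum_comm]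
        refine Finset.sum_congr rfl fun x _ => ?_
        rw [Finset.sum_comm]
        refine Finset.sum_congr rfl fun y _ => ?_
        rw [Finset.sum_comm]
        simp_rw [Finset.mul_sum]
    _ = _ := by
        simp_rw [sum_walsh, mul_eq_one_iff, mul_ite, mul_zero,
          Finset.sum_ite_eq', Finset.mem_univ, if_true, Finset.mul_sum]
        refine Finset.sum_congr rfl fun x _ => Finset.sum_congr rfl fun y _ => ?_
        ring

lemma card_cube : Fintype.card (E → ℤˣ) = 2 ^ Fintype.card E := by
  simp

/-- A uniform bound on Walsh coefficients bounds the correlation of `maj` over triples. -/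
lemma abs_sum_maj_triple_le (m : ℕ) {B : ℝ} (hB : ∀ S : Finset E, |coeff (maj m) S| ≤ B) :
    |∑ x : E → ℤˣ, ∑ y, maj m x * maj m y * maj m (x * y)| ≤ 2 ^ Fintype.card E * B := by
  have hpos : (0 : ℝ) < 2 ^ Fintype.card E := by positivity
  refine le_of_mul_le_mul_left ?_ hpos
  rw [← abs_of_pos hpos, ← abs_mul, abs_of_pos hpos, ← sum_coeff_cube]
  calc |∑ S : Finset E, coeff (maj m) S ^ 3|
      ≤ ∑ S : Finset E, |coeff (maj m) S ^ 3| := Finset.abs_sum_le_sum_abs _ _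
    _ ≤ ∑ S : Finset E, coeff (maj m) S ^ 2 * B := by
        refine Finset.sum_le_sum fun S _ => ?_
        rw [pow_succ, abs_mul, abs_of_nonneg (sq_nonneg _)]
        exact mul_le_mul_of_nonneg_left (hB S) (sq_nonneg _)
    _ = _ := by
        rw [← Finset.sum_mul, sum_coeff_sq]
        simp [maj_sq]
        ring

lemma sum_maj {m : ℕ} (hE : Fintype.card E = 2 * m + 1) : ∑ x : E → ℤˣ, maj m x = 0 := by
  have h : ∑ x : E → ℤˣ, maj m (-x) = ∑ x : E → ℤˣ, maj m x :=
    Equiv.sum_comp (Equiv.neg (E → ℤˣ)) (maj m)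
  simp_rw [maj_neg hE, Finset.sum_neg_distrib] at h
  linarith

lemma countPos_mul_mulSingle_le (x : E → ℤˣ) (i : E) (u : ℤˣ) :
    countPos (x * Pi.mulSingle i u) ≤ countPos x + 1 := by
  refine le_trans (Finset.card_le_card ?_)
    (Finset.card_insert_le i (Finset.univ.filter fun j => x j = 1))
  intro j hj
  by_cases h : j = i
  · simp [h]
  · simpa [h] using hj

lemma card_countPos_eq_le (k : ℕ) :
    #{x : E → ℤˣ | countPos x = k} ≤ (Fintype.card E).choose k := by
  rw [← Finset.card_univ (α := E), ← Finset.card_powersetCard]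
  refine Finset.card_le_card_of_injOn (fun x => Finset.univ.filter fun i => x i = 1) ?_ ?_
  · intro x hx
    have hk : countPos x = k := (Finset.mem_filter.mp (Finset.mem_coe.mp hx)).2
    simpa [Finset.mem_powersetCard, countPos] using hk
  · intro x _ y _ hxy
    ext1 i
    have h : x i = 1 ↔ y i = 1 := by simpa using Finset.ext_iff.mp hxy i
    rcases Int.units_eq_one_or (x i) with hx | hx <;>
      rcases Int.units_eq_one_or (y i) with hy | hy <;> simp_all

lemma abs_maj_sub_maj_flip_le (m : ℕ) (x : E → ℤˣ) (i : E) :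
    |maj m x - maj m (x * Pi.mulSingle i (-1))| ≤
      (if countPos x = m then 2 else 0) + (if countPos x = m + 1 then 2 else 0) := by
  have h₁ := countPos_mul_mulSingle_le x i (-1)
  have h₂ := countPos_mul_mulSingle_le (x * Pi.mulSingle i (-1)) i (-1)
  rw [mul_assoc, mul_self_eq_one, mul_one] at h₂
  unfold maj
  split_ifs <;> first | omega | norm_num

/-- Every Walsh coefficient of the majority function is at most a central binomial coefficient. -/
lemma abs_coeff_maj_le {m : ℕ} (hE : Fintype.card E = 2 * m + 1) (S : Finset E) :
    |coeff (maj m) S| ≤ (m + 1).centralBinom := by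
  rcases S.eq_empty_or_nonempty with rfl | ⟨i, hi⟩
  · simp [coeff, walsh, sum_maj hE]
  have hflip : coeff (maj m) S = -∑ x, maj m (x * Pi.mulSingle i (-1)) * walsh S x := by
    rw [coeff, ← Equiv.sum_comp (Equiv.mulRight (Pi.mulSingle i (-1) : E → ℤˣ)),
      ← Finset.sum_neg_distrib]
    refine Finset.sum_congr rfl fun x _ => ?_
    have hw : walsh S (Pi.mulSingle i (-1) : E → ℤˣ) = -1 := by
      rw [walsh, Finset.prod_eq_single_of_mem i hi]
      · simp
      · intro j _ hj
        simp [hj]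
    simp [walsh_mul, hw]
  have htwo : 2 * coeff (maj m) S =
      ∑ x, (maj m x - maj m (x * Pi.mulSingle i (-1))) * walsh S x := by
    simp_rw [sub_mul, Finset.sum_sub_distrib]
    rw [two_mul]
    nth_rewrite 2 [hflip]
    rw [← sub_eq_add_neg]
    rfl
  have hbound : |2 * coeff (maj m) S| ≤
      2 * ((2 * m + 1).choose m + (2 * m + 1).choose (m + 1)) := by
    rw [htwo]
    calc _ ≤ ∑ x, |(maj m x - maj m (x * Pi.mulSingle i (-1))) * walsh S x| :=
          Finset.abs_sum_le_sum_abs _ _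
      _ ≤ ∑ x : E → ℤˣ, ((if countPos x = m then (2 : ℝ) else 0) +
            (if countPos x = m + 1 then 2 else 0)) := by
          refine Finset.sum_le_sum fun x _ => ?_
          rw [abs_mul, abs_walsh, mul_one]
          exact abs_maj_sub_maj_flip_le m x i
      _ = 2 * ((#{x : E → ℤˣ | countPos x = m} : ℝ) +
            #{x : E → ℤˣ | countPos x = m + 1}) := by
          simp [Finset.sum_add_distrib, ← Finset.sum_filter]
          ring
      _ ≤ _ := by
          have h₁ := card_countPos_eq_le (E := E) m
          have h₂ := card_countPos_eq_le (E := E) (m + 1)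
          rw [hE] at h₁ h₂
          gcongr
  have hchoose : ((m + 1).centralBinom : ℝ) =
      (2 * m + 1).choose m + (2 * m + 1).choose (m + 1) := by
    rw [Nat.centralBinom_eq_two_mul_choose, mul_add_one, Nat.choose_succ_succ]
    push_cast
    rfl
  rw [abs_mul, abs_two] at hbound
  linarith

lemma sum_maj_mul_left {m : ℕ} (hE : Fintype.card E = 2 * m + 1) (x : E → ℤˣ) :
    ∑ y, maj m (x * y) = 0 := by
  rw [← sum_maj hE]
  exact Equiv.sum_comp (Equiv.mulLeft x) (maj m)

/-- The three-fold majority sum over pairs reduces to the triple correlation. -/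
lemma sum_one_add_maj_triple {m : ℕ} (hE : Fintype.card E = 2 * m + 1) :
    ∑ x : E → ℤˣ, ∑ y, (1 + maj m x) * (1 + maj m y) * (1 + maj m (-(x * y))) =
      4 ^ (2 * m + 1) - ∑ x : E → ℤˣ, ∑ y, maj m x * maj m y * maj m (x * y) := by
  have hxy : ∑ x : E → ℤˣ, ∑ y, maj m y * maj m (x * y) = 0 := by
    rw [Finset.sum_comm]
    refine Finset.sum_eq_zero fun y _ => ?_
    simp_rw [← Finset.mul_sum, mul_comm _ y, sum_maj_mul_left hE, mul_zero]
  have hsplit (x y : E → ℤˣ) :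
      (1 + maj m x) * (1 + maj m y) * (1 + maj m (-(x * y))) =
        1 + maj m x + maj m y + maj m x * maj m y - maj m (x * y) - maj m x * maj m (x * y) -
          maj m y * maj m (x * y) - maj m x * maj m y * maj m (x * y) := by
    rw [maj_neg hE]
    ring
  simp_rw [hsplit, Finset.sum_sub_distrib, Finset.sum_add_distrib, hxy, ← Finset.mul_sum,
    sum_maj_mul_left hE, sum_maj hE]
  simp only [Finset.sum_const, Finset.card_univ, card_cube, hE, ← Finset.smul_sum, sum_maj hE]
  simp [← mul_pow]
  norm_num

/-- The four colors as pairs of signs: membership in `{0, 1}` and in `{0, 2}`. -/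
noncomputable def colorEquiv : Fin 4 ≃ ℤˣ × ℤˣ :=
  Equiv.ofBijective (fun c => (![1, 1, -1, -1] c, ![1, -1, 1, -1] c)) (by decide)

/-- Colorings as pairs of sign vectors. -/
noncomputable def coloringEquiv (E : Type*) : (E → Fin 4) ≃ (E → ℤˣ) × (E → ℤˣ) :=
  ((Equiv.refl E).arrowCongr colorEquiv).trans (Equiv.arrowProdEquivProdArrow E _ _)

lemma card_Est_zero_one (f : E → Fin 4) : (Est f 0 1).card = countPos (coloringEquiv E f).1 := by
  have h : ∀ c : Fin 4, (c = 0 ∨ c = 1) ↔ (![1, 1, -1, -1] c : ℤˣ) = 1 := by decide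
  simp only [Est, h]
  rfl

lemma card_Est_zero_two (f : E → Fin 4) : (Est f 0 2).card = countPos (coloringEquiv E f).2 := by
  have h : ∀ c : Fin 4, (c = 0 ∨ c = 2) ↔ (![1, -1, 1, -1] c : ℤˣ) = 1 := by decide
  simp only [Est, h]
  rfl

lemma card_Est_one_two (f : E → Fin 4) :
    (Est f 1 2).card = countPos (-((coloringEquiv E f).1 * (coloringEquiv E f).2)) := by
  have h : ∀ c : Fin 4, (c = 1 ∨ c = 2) ↔
      -((![1, 1, -1, -1] c : ℤˣ) * ![1, -1, 1, -1] c) = 1 := by decide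
  simp only [Est, h]
  rfl

lemma eight_mul_card_majority {m : ℕ} (hE : Fintype.card E = 2 * m + 1) :
    8 * ((Finset.univ.filter (fun f : E → Fin 4 =>
        m < (Est f 0 1).card ∧ m < (Est f 0 2).card ∧ m < (Est f 1 2).card)).card : ℝ) =
      4 ^ (2 * m + 1) - ∑ x : E → ℤˣ, ∑ y, maj m x * maj m y * maj m (x * y) := by
  rw [← sum_one_add_maj_triple hE, ← Fintype.sum_prod_type', ← (coloringEquiv E).sum_comp,
    Finset.card_filter, Nat.cast_sum, Finset.mul_sum]
  refine Finset.sum_congr rfl fun f _ => ?_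
  rw [card_Est_zero_one, card_Est_zero_two, card_Est_one_two]
  unfold maj
  split_ifs <;> first | tauto | norm_num

end SignCube

/-- An upper bound of order `4 ^ n / √n` for central binomial coefficients, in squared form. -/
lemma Nat.two_mul_add_one_mul_centralBinom_sq_le (n : ℕ) :
    (2 * n + 1) * n.centralBinom ^ 2 ≤ 16 ^ n := by
  induction n with
  | zero => simp
  | succ n ih =>
    have h := Nat.succ_mul_centralBinom_succ n
    refine Nat.le_of_mul_le_mul_left ?_ (show 0 < (n + 1) ^ 2 by positivity)
    calc (n + 1) ^ 2 * ((2 * (n + 1) + 1) * (n + 1).centralBinom ^ 2)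
        = (2 * n + 3) * ((n + 1) * (n + 1).centralBinom) ^ 2 := by ring
      _ = 4 * ((2 * n + 1) * (2 * n + 3)) * ((2 * n + 1) * n.centralBinom ^ 2) := by
          rw [h]
          ring
      _ ≤ 4 * (4 * (n + 1) ^ 2) * 16 ^ n := by
          exact Nat.mul_le_mul (Nat.mul_le_mul_left 4 (by nlinarith)) ih
      _ = (n + 1) ^ 2 * 16 ^ (n + 1) := by ring

lemma tendsto_centralBinom_div_four_pow :
    Filter.Tendsto (fun n : ℕ => (n.centralBinom : ℝ) / 4 ^ n) Filter.atTop (nhds 0) := by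
  have hsq : Filter.Tendsto (fun n : ℕ => ((n.centralBinom : ℝ) / 4 ^ n) ^ 2)
      Filter.atTop (nhds 0) := by
    refine squeeze_zero (fun n => sq_nonneg _) (fun n => ?_)
      (tendsto_one_div_add_atTop_nhds_zero_nat (𝕜 := ℝ))
    have h : ((2 * n + 1 : ℕ) : ℝ) * (n.centralBinom : ℝ) ^ 2 ≤ 16 ^ n := by
      exact_mod_cast Nat.two_mul_add_one_mul_centralBinom_sq_le n
    have h16 : ((4 : ℝ) ^ n) ^ 2 = 16 ^ n := by
      rw [← pow_mul, mul_comm, pow_mul]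
      norm_num
    rw [div_pow, h16, div_le_div_iff₀ (by positivity) (by positivity)]
    push_cast at h
    nlinarith [mul_nonneg (Nat.cast_nonneg (α := ℝ) n) (sq_nonneg (n.centralBinom : ℝ))]
  simpa [Real.sqrt_sq_eq_abs, abs_div] using hsq.sqrt

/-- For uniform random 4-colorings of finite sets `E_m` with `|E_m| = 2m+1`, the
probability that each of `E_{ab}(f)`, `E_{ac}(f)`, `E_{bc}(f)` has more than `m` elements
(the majority property) tends to `1/8` as `m → ∞`. -/
theorem majority_limit_abc (E : ℕ → Type*) [∀ m, Fintype (E m)] [∀ m, DecidableEq (E m)]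
    (hcard : ∀ m, Fintype.card (E m) = 2 * m + 1) :
    Filter.Tendsto
      (fun m =>
        ((Finset.univ.filter (fun f : E m → Fin 4 =>
            m < (Est f 0 1).card ∧ m < (Est f 0 2).card ∧ m < (Est f 1 2).card)).card : ℝ)
          / 4 ^ (2 * m + 1))
      Filter.atTop (nhds (1 / 8)) := by
  set T : ℕ → ℝ := fun m => ∑ x : E m → ℤˣ, ∑ y,
    SignCube.maj m x * SignCube.maj m y * SignCube.maj m (x * y) with hT
  have hbound (m : ℕ) : |T m / 4 ^ (2 * m + 1)| ≤ 2 * ((m + 1).centralBinom / 4 ^ (m + 1)) := by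
    have h := SignCube.abs_sum_maj_triple_le m (SignCube.abs_coeff_maj_le (hcard m))
    rw [hcard] at h
    rw [abs_div, abs_of_pos (by positivity : (0 : ℝ) < 4 ^ (2 * m + 1)),
      div_le_iff₀ (by positivity)]
    refine h.trans_eq ?_
    have h4 : (4 : ℝ) ^ (2 * m + 1) = 2 ^ (2 * m + 1) * 2 ^ (2 * m + 1) := by
      rw [← mul_pow]
      norm_num
    have h2 : (4 : ℝ) ^ (m + 1) = 2 * 2 ^ (2 * m + 1) := by
      rw [← pow_succ', show 2 * m + 1 + 1 = 2 * (m + 1) by ring, pow_mul]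
      norm_num
    rw [h4, h2]
    field_simp
  have hlim : Filter.Tendsto (fun m => T m / 4 ^ (2 * m + 1)) Filter.atTop (nhds 0) := by
    refine squeeze_zero_norm hbound ?_
    simpa using
      ((Filter.tendsto_add_atTop_iff_nat 1).mpr tendsto_centralBinom_div_four_pow).const_mul 2
  have hmain := (hlim.const_sub 1).div_const 8
  rw [sub_zero] at hmain
  refine hmain.congr fun m => ?_
  have h := SignCube.eight_mul_card_majority (hcard m)
  have h4 : (4 : ℝ) ^ (2 * m + 1) ≠ 0 := by positivity
  field_simp
  simp only [hT]
  linarith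
end
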